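/- For every integer N ≥ 1 and every real q with 0 < q < 1: ∏_{k=1}^∞ ∏_{i=0}^{2N} (1 + q^(k − i/(2N))) = 2 · ∏_{k=1}^∞ (1 + q^k) / ∏_{k=1}^∞ (1 − q^((2k−1)/(2N))). -/

import Mathlib

open scoped BigOperators

/-! With `x = q ^ (1 / n)`, the factors for `i < n` are `1 + x ^ m` with every `m ≥ 1` occurring
exactly once, and the factors for `i = n` are `1 + q ^ k` with `k ≥ 0`, whose first term is `2`.
Euler's identity `∏ (1 + x ^ m) * ∏ (1 - x ^ (2 * m - 1)) = 1` rewrites the former product; it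
follows from `(1 + x ^ m) * (1 - x ^ m) = 1 - x ^ (2 * m)` by cancelling the even factors of
`∏ (1 - x ^ m)`. -/

section Blocks

variable {M : Type*} [CommMonoid M] [TopologicalSpace M] [ContinuousMul M] [RegularSpace M]

theorem hasProd_prod_range_mul_add {f : ℕ → M} {a : M} {n : ℕ} (hn : n ≠ 0) (hf : HasProd f a) :
    HasProd (fun k ↦ ∏ j ∈ Finset.range n, f (k * n + j)) a := by
  have : NeZero n := ⟨hn⟩
  have hdivMod : HasProd (fun p : ℕ × Fin n ↦ f (p.1 * n + p.2)) a :=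
    (Nat.divModEquiv n).symm.hasProd_iff.2 hf
  simpa only [Finset.prod_range] using hdivMod.prod_fiberwise fun k ↦ hasProd_fintype _

end Blocks

theorem norm_pow_lt_one {R : Type*} [NormedRing R] {x : R} (hx : ‖x‖ < 1) {n : ℕ} (hn : n ≠ 0) :
    ‖x ^ n‖ < 1 :=
  (norm_pow_le' x hn.bot_lt).trans_lt (pow_lt_one₀ (norm_nonneg x) hx hn)

section Euler

variable {R ι : Type*} [NormedCommRing R] {x : R} {e : ι → ℕ}

theorem summable_norm_pow_of_injective (hx : ‖x‖ < 1) (he : e.Injective) :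
    Summable fun i ↦ ‖x ^ e i‖ :=
  (summable_norm_geometric_of_norm_lt_one hx).comp_injective he

variable [NormOneClass R] [CompleteSpace R]

theorem multipliable_one_add_pow_of_injective (hx : ‖x‖ < 1) (he : e.Injective) :
    Multipliable fun i ↦ 1 + x ^ e i :=
  multipliable_one_add_of_summable (summable_norm_pow_of_injective hx he)

theorem multipliable_one_sub_pow_of_injective (hx : ‖x‖ < 1) (he : e.Injective) :
    Multipliable fun i ↦ 1 - x ^ e i := by
  simpa only [sub_eq_add_neg] using multipliable_one_add_of_summable (f := fun i ↦ -x ^ e i)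
    (by simpa only [norm_neg] using summable_norm_pow_of_injective hx he)

theorem multipliable_one_add_pow_succ (hx : ‖x‖ < 1) : Multipliable fun k : ℕ ↦ 1 + x ^ (k + 1) :=
  multipliable_one_add_pow_of_injective hx Nat.succ_injective

theorem tprod_one_add_pow_eq_two_mul (hx : ‖x‖ < 1) :
    ∏' k : ℕ, (1 + x ^ k) = 2 * ∏' k : ℕ, (1 + x ^ (k + 1)) := by
  rw [tprod_eq_zero_mul' (f := fun k ↦ 1 + x ^ k) (multipliable_one_add_pow_succ hx), pow_zero,
    one_add_one_eq_two]

variable [NormMulClass R]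

theorem tprod_one_sub_pow_succ_ne_zero (hx : ‖x‖ < 1) : ∏' k : ℕ, (1 - x ^ (k + 1)) ≠ 0 := by
  have hfactor (k : ℕ) : 1 + -x ^ (k + 1) ≠ 0 := by
    rw [← sub_eq_add_neg, sub_ne_zero]
    intro h
    exact (norm_pow_lt_one hx k.succ_ne_zero).ne (by rw [← h, norm_one])
  simpa only [sub_eq_add_neg] using tprod_one_add_ne_zero_of_summable hfactor
    (by simpa only [norm_neg] using summable_norm_pow_of_injective hx Nat.succ_injective)

theorem tprod_one_add_pow_succ_mul_tprod_one_sub_pow_odd (hx : ‖x‖ < 1) :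
    (∏' k : ℕ, (1 + x ^ (k + 1))) * ∏' k : ℕ, (1 - x ^ (2 * k + 1)) = 1 := by
  have hadd := multipliable_one_add_pow_succ hx
  have hsub : Multipliable fun k : ℕ ↦ 1 - x ^ (k + 1) :=
    multipliable_one_sub_pow_of_injective hx Nat.succ_injective
  have hodd : Multipliable fun k : ℕ ↦ 1 - x ^ (2 * k + 1) :=
    multipliable_one_sub_pow_of_injective hx fun _ _ h ↦ by omega
  have heven : Multipliable fun k : ℕ ↦ 1 - x ^ (2 * k + 1 + 1) :=
    multipliable_one_sub_pow_of_injective hx fun _ _ h ↦ by omega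
  have hne : ∏' k : ℕ, (1 - x ^ (2 * k + 1 + 1)) ≠ 0 := by
    simpa only [← pow_mul, mul_add_one] using
      tprod_one_sub_pow_succ_ne_zero (norm_pow_lt_one hx two_ne_zero)
  refine mul_right_cancel₀ hne ?_
  calc _ = (∏' k : ℕ, (1 + x ^ (k + 1))) * ∏' k : ℕ, (1 - x ^ (k + 1)) := by
        rw [mul_assoc, tprod_even_mul_odd (f := fun k ↦ 1 - x ^ (k + 1)) hodd heven]
    _ = ∏' k : ℕ, (1 + x ^ (k + 1)) * (1 - x ^ (k + 1)) := (hadd.tprod_mul hsub).symm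
    _ = ∏' k : ℕ, (1 - x ^ (2 * k + 1 + 1)) := tprod_congr fun k ↦ by ring
    _ = 1 * ∏' k : ℕ, (1 - x ^ (2 * k + 1 + 1)) := (one_mul _).symm

end Euler

theorem tprod_prod_range_succ_one_add_pow {K : Type*} [NormedField K] [CompleteSpace K] {x : K}
    (hx : ‖x‖ < 1) {n : ℕ} (hn : n ≠ 0) :
    ∏' k : ℕ, ∏ j ∈ Finset.range (n + 1), (1 + x ^ (k * n + j)) =
      2 * (∏' k : ℕ, (1 + (x ^ n) ^ (k + 1))) / ∏' k : ℕ, (1 - x ^ (2 * k + 1)) := by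
  have hxn := norm_pow_lt_one hx hn
  have hblocks : HasProd (fun k ↦ ∏ j ∈ Finset.range n, (1 + x ^ (k * n + j + 1)))
      (∏' m : ℕ, (1 + x ^ (m + 1))) :=
    hasProd_prod_range_mul_add (f := fun m ↦ 1 + x ^ (m + 1)) hn
      (multipliable_one_add_pow_succ hx).hasProd
  have hends : Multipliable fun k : ℕ ↦ 1 + (x ^ n) ^ k :=
    multipliable_one_add_pow_of_injective (e := fun k ↦ k) hxn Function.injective_id
  have heuler := tprod_one_add_pow_succ_mul_tprod_one_sub_pow_odd hx
  calc _ = ∏' k : ℕ, (∏ j ∈ Finset.range n, (1 + x ^ (k * n + j + 1))) * (1 + (x ^ n) ^ k) :=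
        tprod_congr fun k ↦ by
          rw [Finset.prod_range_succ', add_zero, mul_comm k n, pow_mul]
          simp only [add_assoc]
    _ = (∏' m : ℕ, (1 + x ^ (m + 1))) * (2 * ∏' k : ℕ, (1 + (x ^ n) ^ (k + 1))) := by
        rw [hblocks.multipliable.tprod_mul hends, hblocks.tprod_eq,
          tprod_one_add_pow_eq_two_mul hxn]
    _ = _ := by
        rw [eq_div_iff (right_ne_zero_of_mul_eq_one heuler), mul_right_comm, heuler, one_mul]

theorem rpow_natCast_div_natCast {q : ℝ} (hq : 0 ≤ q) (m n : ℕ) :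
    q ^ ((m : ℝ) / n) = (q ^ (n⁻¹ : ℝ)) ^ m := by
  rw [← Real.rpow_mul_natCast hq, div_eq_inv_mul]

theorem stmt17_general (n : ℕ) (hn : n ≠ 0) (q : ℝ) (hq0 : 0 ≤ q) (hq1 : q < 1) :
    (∏' k : ℕ, ∏ i ∈ Finset.range (n + 1), (1 + q ^ (((k : ℝ) + 1) - (i : ℝ) / n))) =
      2 * (∏' k : ℕ, (1 + q ^ (k + 1))) / ∏' k : ℕ, (1 - q ^ ((2 * (k : ℝ) + 1) / n)) := by
  let x : ℝ := q ^ (n⁻¹ : ℝ)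
  have hx : ‖x‖ < 1 := by
    rw [Real.norm_of_nonneg (Real.rpow_nonneg hq0 _)]
    exact Real.rpow_lt_one hq0 hq1 (by positivity)
  have hxn : x ^ n = q := Real.rpow_inv_natCast_pow hq0 hn
  have hodd (k : ℕ) : q ^ ((2 * (k : ℝ) + 1) / n) = x ^ (2 * k + 1) := by
    simpa using rpow_natCast_div_natCast hq0 (2 * k + 1) n
  have hterm (k i : ℕ) (hi : i ≤ n) : q ^ ((k : ℝ) + 1 - i / n) = x ^ (k * n + (n - i)) := by
    rw [← rpow_natCast_div_natCast hq0]
    push_cast [hi]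
    field_simp
    ring_nf
  have hblock (k : ℕ) : ∏ i ∈ Finset.range (n + 1), (1 + q ^ ((k : ℝ) + 1 - i / n)) =
      ∏ j ∈ Finset.range (n + 1), (1 + x ^ (k * n + j)) := by
    rw [← Finset.prod_flip fun j ↦ 1 + x ^ (k * n + j)]
    exact Finset.prod_congr rfl fun i hi ↦ by rw [hterm k i (Finset.mem_range_succ_iff.1 hi)]
  simp only [hblock, hodd, tprod_prod_range_succ_one_add_pow hx hn, hxn]

/-- Product rearrangement in the principal specialization of the level-one
    vacuum-plus-vector character of affine `so(2N+1)`: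
    `∏_{k≥1} ∏_{i=0}^{2N} (1 + q^(k − i/(2N))) = 2·∏_{k≥1}(1+q^k)/∏_{k≥1}(1−q^((2k−1)/(2N)))`. -/
theorem stmt17 (N : ℕ) (hN : 1 ≤ N) (q : ℝ) (hq0 : 0 < q) (hq1 : q < 1) :
    (∏' k : ℕ, ∏ i ∈ Finset.range (2 * N + 1), (1 + q ^ (((k : ℝ) + 1) - (i : ℝ) / (2 * N)))) =
      2 * (∏' k : ℕ, (1 + q ^ (k + 1))) /
        ∏' k : ℕ, (1 - q ^ ((2 * (k : ℝ) + 1) / (2 * N))) := by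
  simpa only [Nat.cast_mul, Nat.cast_ofNat] using
    stmt17_general (2 * N) (by omega) q hq0.le hq1
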